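/- If f ∈ C¹_b(ℝⁿ) with m = sup_x |∇f(x)|, then the Luxemburg norm in the exponential Orlicz space satisfies ‖f − ∫ f(y)M(y)dy‖_{cosh−1, M} ≤ (π/(2√(2 log 2)))·m. -/

import Mathlib

open Real MeasureTheory
open scoped ENNReal

noncomputable section

/-- The standard `n`-dimensional Gaussian density. -/
def gaussM (n : ℕ) (x : EuclideanSpace ℝ (Fin n)) : ℝ :=
  (2 * π) ^ (-(n : ℝ) / 2) * exp (-‖x‖ ^ 2 / 2)

/-- The standard Gaussian measure `M(x)dx` on `ℝⁿ`. -/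
def gaussMeasure (n : ℕ) : Measure (EuclideanSpace ℝ (Fin n)) :=
  volume.withDensity fun x => ENNReal.ofReal (gaussM n x)

/-- The conjugate Young function `(cosh−1)_*`. -/
def conjY (y : ℝ) : ℝ := ∫ t in (0:ℝ)..y, arsinh t

/-- Luxemburg norm for the Young function `Φ` with respect to a measure `μ`. -/
def luxNorm {E : Type*} [MeasurableSpace E] (Φ : ℝ → ℝ) (μ : Measure E)
    (g : E → ℝ) : ℝ :=
  sInf {ρ : ℝ | 0 < ρ ∧ ∫ x, Φ (g x / ρ) ∂μ ≤ 1 ∧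
    Integrable (fun x => Φ (g x / ρ)) μ}

/-! For independent `x`, `y` with a centered Gaussian law `μ`, the path
`x_θ = cos θ • x + sin θ • y` runs from `x` to `y` as `θ` runs from `0` to `π / 2`. Its velocity is
`v_θ = -sin θ • x + cos θ • y`, and by rotation invariance `(x_θ, v_θ)` is again a pair of
independent copies of `μ`, so conditionally on `x_θ` the derivative `Df(x_θ) v_θ` is a centered real
Gaussian of variance at most `σ²`. Hence `f y - f x`, which is `π / 2` times the average of these
derivatives over `θ`, is sub-Gaussian with parameter `(π / 2)² σ²` by the Jensen inequality, and
averaging over `x` gives the same for `f - ∫ f`. A sub-Gaussian `X` with parameter `c` satisfies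
`∫ cosh (X / ρ) ≤ exp (c / (2 ρ²))`, which is at most `2` as soon as `ρ² ≥ c / (2 log 2)`. -/

section Subgaussian

open ProbabilityTheory
open scoped NNReal

variable {α β : Type*} [MeasurableSpace α] [MeasurableSpace β] {μ : Measure α} {ν : Measure β}
  {c : ℝ≥0}

lemma hasSubgaussianMGF_prod_of_ae [IsProbabilityMeasure μ] [SFinite ν] {X : α × β → ℝ}
    (hX : AEStronglyMeasurable X (μ.prod ν))
    (h : ∀ᵐ a ∂μ, HasSubgaussianMGF (fun b ↦ X (a, b)) c ν) :
    HasSubgaussianMGF X c (μ.prod ν) := by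
  have mgf_section_le (t : ℝ) :
      ∀ᵐ a ∂μ, ∫ b, exp (t * X (a, b)) ∂ν ≤ exp (c * t ^ 2 / 2) := by
    filter_upwards [h] with a ha using ha.mgf_le t
  have integrable_exp (t : ℝ) : Integrable (fun p ↦ exp (t * X p)) (μ.prod ν) := by
    have hexp : AEStronglyMeasurable (fun p ↦ exp (t * X p)) (μ.prod ν) :=
      continuous_exp.comp_aestronglyMeasurable (hX.const_mul t)
    refine (integrable_prod_iff hexp).2 ⟨?_, ?_⟩
    · filter_upwards [h] with a ha using ha.integrable_exp_mul t
    · refine (integrable_const (exp (c * t ^ 2 / 2))).mono' hexp.norm.integral_prod_right' ?_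
      filter_upwards [mgf_section_le t] with a ha
      have section_nonneg : 0 ≤ ∫ b, exp (t * X (a, b)) ∂ν := mgf_nonneg
      simpa only [norm_of_nonneg (exp_pos _).le, norm_of_nonneg section_nonneg] using ha
  refine ⟨integrable_exp, fun t ↦ ?_⟩
  calc mgf X (μ.prod ν) t = ∫ a, ∫ b, exp (t * X (a, b)) ∂ν ∂μ := integral_prod _ (integrable_exp t)
    _ ≤ ∫ _, exp (c * t ^ 2 / 2) ∂μ :=
      integral_mono_ae (integrable_exp t).integral_prod_left (integrable_const _) (mgf_section_le t)
    _ = exp (c * t ^ 2 / 2) := by simp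

lemma hasSubgaussianMGF_integral_fst [IsProbabilityMeasure μ] [SFinite ν]
    {X : α × β → ℝ} (hX : HasSubgaussianMGF X c (μ.prod ν)) :
    HasSubgaussianMGF (fun b ↦ ∫ a, X (a, b) ∂μ) c ν := by
  have jensen (t : ℝ) :
      ∀ᵐ b ∂ν, exp (t * ∫ a, X (a, b) ∂μ) ≤ ∫ a, exp (t * X (a, b)) ∂μ := by
    filter_upwards [hX.integrable.prod_left_ae, (hX.integrable_exp_mul t).prod_left_ae]
      with b hXb hexp
    rw [← integral_const_mul]
    exact convexOn_exp.map_integral_le continuous_exp.continuousOn isClosed_univ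
      (.of_forall fun _ ↦ Set.mem_univ _) (hXb.const_mul t) hexp
  have integrable_exp (t : ℝ) : Integrable (fun b ↦ exp (t * ∫ a, X (a, b) ∂μ)) ν := by
    refine (hX.integrable_exp_mul t).integral_prod_right.mono'
      (continuous_exp.comp_aestronglyMeasurable
        (hX.integrable.integral_prod_right.aestronglyMeasurable.const_mul t)) ?_
    filter_upwards [jensen t] with b hb
    rwa [norm_of_nonneg (exp_pos _).le]
  refine ⟨integrable_exp, fun t ↦ ?_⟩
  calc mgf (fun b ↦ ∫ a, X (a, b) ∂μ) ν t ≤ ∫ b, ∫ a, exp (t * X (a, b)) ∂μ ∂ν :=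
      integral_mono_ae (integrable_exp t) (hX.integrable_exp_mul t).integral_prod_right (jensen t)
    _ = mgf X (μ.prod ν) t := (integral_prod_symm _ (hX.integrable_exp_mul t)).symm
    _ ≤ exp (c * t ^ 2 / 2) := hX.mgf_le t

lemma hasSubgaussianMGF_sub_integral [IsProbabilityMeasure μ] {f : α → ℝ}
    (h : HasSubgaussianMGF (fun p : α × α ↦ f p.2 - f p.1) c (μ.prod μ)) :
    HasSubgaussianMGF (fun x ↦ f x - ∫ y, f y ∂μ) c μ := by
  obtain ⟨y, hy⟩ := h.integrable.prod_left_ae.exists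
  have hf : Integrable f μ := by
    simpa only [Pi.sub_def, sub_sub_cancel] using Integrable.sub (integrable_const (f y)) hy
  refine (hasSubgaussianMGF_integral_fst h).congr (.of_forall fun x ↦ ?_)
  simp [integral_sub (integrable_const (f x)) hf]

section LuxemburgNorm

variable {X : α → ℝ}

lemma integrable_cosh_mul_of_hasSubgaussianMGF (hX : HasSubgaussianMGF X c μ) (t : ℝ) :
    Integrable (fun x ↦ cosh (t * X x)) μ := by
  simpa only [cosh_eq, ← neg_mul] using
    ((hX.integrable_exp_mul t).fun_add (hX.integrable_exp_mul (-t))).div_const 2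

lemma integral_cosh_mul_le_of_hasSubgaussianMGF (hX : HasSubgaussianMGF X c μ) (t : ℝ) :
    ∫ x, cosh (t * X x) ∂μ ≤ exp (c * t ^ 2 / 2) := by
  have hpos := hX.mgf_le t
  have hneg := hX.mgf_le (-t)
  rw [neg_sq] at hneg
  calc ∫ x, cosh (t * X x) ∂μ = (mgf X μ t + mgf X μ (-t)) / 2 := by
        simp only [cosh_eq, ← neg_mul, mgf]
        rw [integral_div, integral_add (hX.integrable_exp_mul t) (hX.integrable_exp_mul (-t))]
    _ ≤ exp (c * t ^ 2 / 2) := by linarith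

lemma luxNorm_le {Φ : ℝ → ℝ} {ρ : ℝ} (hρ : 0 < ρ) (hle : ∫ x, Φ (X x / ρ) ∂μ ≤ 1)
    (hint : Integrable (fun x ↦ Φ (X x / ρ)) μ) : luxNorm Φ μ X ≤ ρ :=
  csInf_le ⟨0, fun _ h ↦ h.1.le⟩ ⟨hρ, hle, hint⟩

lemma luxNorm_cosh_sub_one_le_of_hasSubgaussianMGF [IsProbabilityMeasure μ]
    (hX : HasSubgaussianMGF X c μ) :
    luxNorm (fun u ↦ cosh u - 1) μ X ≤ √(c / (2 * log 2)) := by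
  -- For `c = 0` the right-hand side is not an admissible scale, so approach it from above.
  refine le_of_forall_gt_imp_ge_of_dense fun ρ hρ ↦ ?_
  have hρ_pos : 0 < ρ := (sqrt_nonneg _).trans_lt hρ
  have hlog : 0 < 2 * log 2 := mul_pos two_pos (log_pos one_lt_two)
  have exponent_le : c * ρ⁻¹ ^ 2 / 2 ≤ log 2 := by
    have := (div_lt_iff₀ hlog).1 ((sqrt_lt' hρ_pos).1 hρ)
    rw [inv_pow, ← div_eq_mul_inv, div_div, div_le_iff₀ (by positivity)]
    linarith
  have integral_cosh_le : ∫ x, cosh (ρ⁻¹ * X x) ∂μ ≤ 2 :=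
    calc ∫ x, cosh (ρ⁻¹ * X x) ∂μ ≤ exp (c * ρ⁻¹ ^ 2 / 2) :=
          integral_cosh_mul_le_of_hasSubgaussianMGF hX ρ⁻¹
      _ ≤ exp (log 2) := exp_le_exp.2 exponent_le
      _ = 2 := exp_log two_pos
  have hint := integrable_cosh_mul_of_hasSubgaussianMGF hX ρ⁻¹
  refine luxNorm_le hρ_pos ?_ ?_ <;> simp only [div_eq_inv_mul]
  · rw [integral_sub hint (integrable_const 1), integral_const, probReal_univ, one_smul]
    linarith
  · exact hint.sub (integrable_const 1)

end LuxemburgNorm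

end Subgaussian

section Calculus

open ContinuousLinearMap (rotation)

variable {E F : Type*} [NormedAddCommGroup E] [NormedSpace ℝ E]
  [NormedAddCommGroup F] [NormedSpace ℝ F]

lemma measurable_fderiv_apply_of_differentiable [SecondCountableTopology E] [MeasurableSpace E]
    [BorelSpace E] [MeasurableSpace F] [BorelSpace F] {f : E → F} (hf : Differentiable ℝ f) :
    Measurable fun p : E × E ↦ fderiv ℝ f p.1 p.2 := by
  have hcont := hf.continuous
  refine measurable_of_tendsto_metrizable
    (f := fun (k : ℕ) (p : E × E) ↦ (k : ℝ) • (f (p.1 + (k : ℝ)⁻¹ • p.2) - f p.1))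
    (fun k ↦ Continuous.measurable (by fun_prop)) (tendsto_pi_nhds.2 fun p ↦ ?_)
  exact (hf p.1).hasFDerivAt.lim p.2 (by simpa using tendsto_natCast_atTop_atTop)

lemma hasDerivAt_fst_rotation (p : E × E) (θ : ℝ) :
    HasDerivAt (fun θ ↦ (rotation θ p).1) (rotation θ p).2 θ :=
  ((hasDerivAt_cos θ).smul_const p.1).add ((hasDerivAt_sin θ).smul_const p.2)

lemma continuous_rotation_apply : Continuous fun q : ℝ × E × E ↦ rotation q.1 q.2 := by
  simp only [ContinuousLinearMap.rotation_apply]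
  fun_prop

lemma integral_fderiv_rotation [CompleteSpace F] {f : E → F} (hf : Differentiable ℝ f) (p : E × E)
    (hint : IntervalIntegrable (fun θ ↦ fderiv ℝ f (rotation θ p).1 (rotation θ p).2)
      volume 0 (π / 2)) :
    ∫ θ in (0)..(π / 2), fderiv ℝ f (rotation θ p).1 (rotation θ p).2 = f p.2 - f p.1 := by
  rw [intervalIntegral.integral_eq_sub_of_hasDerivAt
    (fun θ _ ↦ (hf _).hasFDerivAt.comp_hasDerivAt θ (hasDerivAt_fst_rotation p θ)) hint]
  simp [ContinuousLinearMap.rotation_apply]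

end Calculus

section UniformOnInterval

open ProbabilityTheory

variable {F : Type*} [NormedAddCommGroup F] {a b : ℝ}

lemma intervalIntegrable_of_integrable_cond_Ioc (hab : a < b) {g : ℝ → F}
    (hg : Integrable g volume[|Set.Ioc a b]) :
    IntervalIntegrable g volume a b := by
  rw [intervalIntegrable_iff_integrableOn_Ioc_of_le hab.le]
  exact (integrable_smul_measure (by simp) (by simpa using hab)).1 hg

lemma integral_cond_Ioc [NormedSpace ℝ F] (hab : a ≤ b) (g : ℝ → F) :
    ∫ x, g x ∂volume[|Set.Ioc a b] = (b - a)⁻¹ • ∫ x in a..b, g x := by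
  rw [ProbabilityTheory.cond, integral_smul_measure, intervalIntegral.integral_of_le hab]
  simp [hab]

lemma isProbabilityMeasure_cond_Ioc (hab : a < b) :
    IsProbabilityMeasure (volume[|Set.Ioc a b] : Measure ℝ) :=
  cond_isProbabilityMeasure_of_finite (by simpa using hab) (by simp)

end UniformOnInterval

section GaussMeasure

open ProbabilityTheory

variable {n : ℕ}

lemma gaussM_nonneg (x : EuclideanSpace ℝ (Fin n)) : 0 ≤ gaussM n x := by
  unfold gaussM
  positivity

lemma measurable_gaussM : Measurable (gaussM n) := by
  unfold gaussM
  fun_prop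

lemma ofReal_gaussM_mul_cexp_inner (x t : EuclideanSpace ℝ (Fin n)) :
    (gaussM n x : ℂ) * Complex.exp (inner ℝ x t * Complex.I) =
      ((2 * π) ^ (-(n : ℝ) / 2) : ℝ) *
        Complex.exp (-(1 / 2) * ‖x‖ ^ 2 + Complex.I * inner ℝ t x) := by
  rw [gaussM, Complex.ofReal_mul, mul_assoc, Complex.ofReal_exp, ← Complex.exp_add,
    real_inner_comm]
  push_cast
  ring_nf

lemma integrable_gaussM : Integrable (gaussM n) := by
  have h := (GaussianFourier.integrable_cexp_neg_mul_sq_norm_add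
    (V := EuclideanSpace ℝ (Fin n)) (b := 1 / 2) (by norm_num) Complex.I 0).const_mul
    (((2 * π) ^ (-(n : ℝ) / 2) : ℝ) : ℂ)
  simp only [← ofReal_gaussM_mul_cexp_inner] at h
  simpa using h.re

instance : IsFiniteMeasure (gaussMeasure n) :=
  isFiniteMeasure_withDensity_ofReal integrable_gaussM.hasFiniteIntegral

lemma charFun_gaussMeasure (t : EuclideanSpace ℝ (Fin n)) :
    charFun (gaussMeasure n) t = Complex.exp (-‖t‖ ^ 2 / 2) := by
  have normalization :
      (((2 * π) ^ (-(n : ℝ) / 2) : ℝ) : ℂ) * (π / (1 / 2)) ^ (n / 2 : ℂ) = 1 := by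
    have h2pi : (π / (1 / 2) : ℂ) = (2 * π : ℝ) := by push_cast; ring
    have hexp : (n / 2 : ℂ) = (n / 2 : ℝ) := by push_cast; rfl
    rw [h2pi, hexp, ← Complex.ofReal_cpow (by positivity), ← Complex.ofReal_mul,
      ← rpow_add (by positivity), neg_div, neg_add_cancel, rpow_zero, Complex.ofReal_one]
  calc charFun (gaussMeasure n) t
      = ∫ x, (gaussM n x : ℂ) * Complex.exp (inner ℝ x t * Complex.I) := by
        rw [charFun_apply, gaussMeasure, integral_withDensity_eq_integral_toReal_smul
          measurable_gaussM.ennreal_ofReal (by simp)]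
        simp only [ENNReal.toReal_ofReal (gaussM_nonneg _), Complex.real_smul]
    _ = ((2 * π) ^ (-(n : ℝ) / 2) : ℝ) * ((π / (1 / 2)) ^ (n / 2 : ℂ) *
          Complex.exp (Complex.I ^ 2 * ‖t‖ ^ 2 / (4 * (1 / 2)))) := by
        simp only [ofReal_gaussM_mul_cexp_inner]
        rw [integral_const_mul, GaussianFourier.integral_cexp_neg_mul_sq_norm_add (by norm_num),
          finrank_euclideanSpace_fin]
    _ = Complex.exp (-‖t‖ ^ 2 / 2) := by
        rw [← mul_assoc, normalization, one_mul, Complex.I_sq]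
        ring_nf

lemma gaussMeasure_eq_stdGaussian :
    gaussMeasure n = stdGaussian (EuclideanSpace ℝ (Fin n)) :=
  Measure.ext_of_charFun <| funext fun t ↦ by rw [charFun_gaussMeasure, charFun_stdGaussian]

end GaussMeasure

section Gaussian

open ProbabilityTheory
open ContinuousLinearMap (rotation)
open scoped NNReal

lemma hasSubgaussianMGF_strongDual {E : Type*} [TopologicalSpace E] [AddCommMonoid E] [Module ℝ E]
    [MeasurableSpace E] {μ : Measure E} [IsGaussian μ] {c : ℝ≥0} {L : StrongDual ℝ E}
    (hmean : μ[L] = 0) (hvar : Var[L; μ] ≤ c) : HasSubgaussianMGF L c μ := by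
  have hmap := IsGaussian.map_eq_gaussianReal (μ := μ) L
  rw [hmean] at hmap
  refine ⟨fun t ↦ ?_, fun t ↦ ?_⟩
  · rw [← mgf_pos_iff, mgf_gaussianReal hmap]
    exact exp_pos _
  · rw [mgf_gaussianReal hmap, zero_mul, zero_add, Real.coe_toNNReal _ (variance_nonneg _ _)]
    gcongr

variable {E : Type*} [NormedAddCommGroup E] [NormedSpace ℝ E] [MeasurableSpace E] [BorelSpace E]
  [SecondCountableTopology E] [CompleteSpace E] {μ : Measure E} [IsGaussian μ] {f : E → ℝ} {c : ℝ≥0}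

lemma hasSubgaussianMGF_fderiv_apply (hμ : μ[id] = 0) (hf : Differentiable ℝ f)
    (hvar : ∀ x, Var[fderiv ℝ f x; μ] ≤ c) :
    HasSubgaussianMGF (fun p : E × E ↦ fderiv ℝ f p.1 p.2) c (μ.prod μ) :=
  hasSubgaussianMGF_prod_of_ae
    (measurable_fderiv_apply_of_differentiable hf).aestronglyMeasurable
    (.of_forall fun x ↦ hasSubgaussianMGF_strongDual
      (by rw [IsGaussian.integral_dual, show ∫ y, y ∂μ = 0 from hμ, map_zero]) (hvar x))

lemma hasSubgaussianMGF_fderiv_rotation (hμ : μ[id] = 0) (hf : Differentiable ℝ f)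
    (hvar : ∀ x, Var[fderiv ℝ f x; μ] ≤ c) (θ : ℝ) :
    HasSubgaussianMGF (fun p : E × E ↦ fderiv ℝ f (rotation θ p).1 (rotation θ p).2) c
      (μ.prod μ) := by
  have h := hasSubgaussianMGF_fderiv_apply hμ hf hvar
  rw [← IsGaussian.map_rotation_eq_self hμ θ] at h
  exact .of_map (rotation θ).continuous.aemeasurable h

lemma hasSubgaussianMGF_sub_of_centered (hμ : μ[id] = 0) (hf : Differentiable ℝ f)
    (hvar : ∀ x, Var[fderiv ℝ f x; μ] ≤ c) :
    HasSubgaussianMGF (fun p : E × E ↦ f p.2 - f p.1) ((NNReal.pi / 2) ^ 2 * c) (μ.prod μ) := by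
  have hpi : 0 < π / 2 := by positivity
  have := isProbabilityMeasure_cond_Ioc hpi
  have joint : HasSubgaussianMGF
      (fun q : ℝ × E × E ↦ fderiv ℝ f (rotation q.1 q.2).1 (rotation q.1 q.2).2) c
      (volume[|Set.Ioc 0 (π / 2)].prod (μ.prod μ)) :=
    hasSubgaussianMGF_prod_of_ae
      ((measurable_fderiv_apply_of_differentiable hf).comp
        continuous_rotation_apply.measurable).aestronglyMeasurable
      (.of_forall (hasSubgaussianMGF_fderiv_rotation hμ hf hvar))
  refine ((hasSubgaussianMGF_integral_fst joint).const_mul (π / 2)).congr ?_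
  -- The derivative of `f` need not be bounded along the path through every `p`; Fubini provides its
  -- integrability for almost every `p`.
  filter_upwards [joint.integrable.prod_left_ae] with p hp
  rw [integral_cond_Ioc hpi.le,
    integral_fderiv_rotation hf p (intervalIntegrable_of_integrable_cond_Ioc hpi hp),
    sub_zero, smul_eq_mul, mul_inv_cancel_left₀ hpi.ne']

lemma hasSubgaussianMGF_sub_integral_of_centered (hμ : μ[id] = 0) (hf : Differentiable ℝ f)
    (hvar : ∀ x, Var[fderiv ℝ f x; μ] ≤ c) :
    HasSubgaussianMGF (fun x ↦ f x - ∫ y, f y ∂μ) ((NNReal.pi / 2) ^ 2 * c) μ :=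
  hasSubgaussianMGF_sub_integral (hasSubgaussianMGF_sub_of_centered hμ hf hvar)

theorem hasSubgaussianMGF_sub_integral_of_variance_fderiv_le (hf : Differentiable ℝ f)
    (hvar : ∀ x, Var[fderiv ℝ f x; μ] ≤ c) :
    HasSubgaussianMGF (fun x ↦ f x - ∫ y, f y ∂μ) ((NNReal.pi / 2) ^ 2 * c) μ := by
  set a := ∫ x, x ∂μ
  have hshift : AEMeasurable (fun x ↦ x + -a) μ := by fun_prop
  have hcont := hf.continuous
  have hcentered : (μ.map (fun x ↦ x + -a))[id] = 0 := by
    rw [integral_map hshift (by fun_prop)]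
    simp [integral_add IsGaussian.integrable_fun_id (integrable_const _), a]
  have hvar_shift (x : E) :
      Var[fderiv ℝ (fun x ↦ f (x + a)) x; μ.map (fun x ↦ x + -a)] ≤ c := by
    rw [fderiv_comp_add_right, variance_map (by fun_prop) hshift]
    simpa [Function.comp_def,
      variance_add_const (fderiv ℝ f (x + a)).continuous.aestronglyMeasurable] using hvar (x + a)
  convert HasSubgaussianMGF.of_map hshift <| hasSubgaussianMGF_sub_integral_of_centered hcentered
    (f := fun x ↦ f (x + a)) (by fun_prop) hvar_shift using 1
  ext x
  rw [integral_map hshift (Continuous.aestronglyMeasurable (by fun_prop))]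
  simp

theorem dispersion_exponential_general {σ : ℝ≥0} (hf : Differentiable ℝ f)
    (hvar : ∀ x, Var[fderiv ℝ f x; μ] ≤ σ ^ 2) :
    luxNorm (fun u ↦ cosh u - 1) μ (fun x ↦ f x - ∫ y, f y ∂μ) ≤
      π / (2 * √(2 * log 2)) * σ := by
  calc luxNorm (fun u ↦ cosh u - 1) μ (fun x ↦ f x - ∫ y, f y ∂μ)
      ≤ √(((NNReal.pi / 2) ^ 2 * σ ^ 2 : ℝ≥0) / (2 * log 2)) :=
        luxNorm_cosh_sub_one_le_of_hasSubgaussianMGF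
          (hasSubgaussianMGF_sub_integral_of_variance_fderiv_le hf (by exact_mod_cast hvar))
    _ = √((π / 2 * σ) ^ 2) / √(2 * log 2) := by
        rw [sqrt_div (by positivity), ← mul_pow]
        simp
    _ = π / (2 * √(2 * log 2)) * σ := by
        rw [sqrt_sq (by positivity)]
        ring

end Gaussian

/-- if `f ∈ C¹_b(ℝⁿ)` with `|∇f| ≤ m` everywhere, then
`‖f − ∫fdM‖_{cosh−1,M} ≤ (π/(2√(2 log 2)))·m`. -/
theorem dispersion_exponential {n : ℕ} (f : EuclideanSpace ℝ (Fin n) → ℝ)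
    (hf : ContDiff ℝ 1 f) (m : ℝ) (hm : ∀ x, ‖fderiv ℝ f x‖ ≤ m) :
    luxNorm (fun u => cosh u - 1) (gaussMeasure n)
        (fun x => f x - ∫ y, f y ∂(gaussMeasure n)) ≤
      π / (2 * Real.sqrt (2 * log 2)) * m := by
  lift m to NNReal using (norm_nonneg _).trans (hm 0)
  rw [gaussMeasure_eq_stdGaussian]
  exact dispersion_exponential_general (hf.differentiable one_ne_zero) fun x ↦
    (ProbabilityTheory.variance_dual_stdGaussian _).trans_le
      (pow_le_pow_left₀ (norm_nonneg _) (hm x) 2)
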